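/- Consider the one-parameter family of coefficient vectors (0,1,0,d). Over the field ℚ(t) of rational functions in one variable t, the matrix of consequences M(0,1,0,t) has rank exactly 34; moreover, over ℚ, the matrix M(0,1,0,0) has rank exactly 26 and the matrix M(0,1,0,−1) has rank exactly 31. -/

import Mathlib

/-- First components `p_i` (1-indexed columns) of the 42 quadruples. -/
def colP : Fin 42 → ℕ :=
  ![4,8,11,13,14,1,4,8,11,13,14,1,4,8,11,13,14,1,5,9,12,15,16,2,17,24,26,27,28,7,19,29,34,36,37,10,2,7,10,3,23,33]

/-- Second components `q_i`. -/
def colQ : Fin 42 → ℕ :=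
  ![5,9,12,15,16,2,6,18,20,21,22,4,6,18,20,21,22,4,6,18,20,21,22,4,18,25,30,31,32,8,20,30,35,38,39,11,3,17,19,5,24,34]

/-- Third components `r_i`. -/
def colR : Fin 42 → ℕ :=
  ![21,31,38,40,41,13,17,24,26,27,28,7,18,25,30,31,32,8,18,25,30,31,32,8,20,30,35,38,39,11,21,31,38,40,41,13,15,23,29,9,26,36]

/-- Fourth components `s_i`. -/
def colS : Fin 42 → ℕ :=
  ![22,32,39,41,42,14,22,32,39,41,42,14,19,29,34,36,37,10,20,30,35,38,39,11,21,31,38,40,41,13,22,32,39,41,42,14,16,28,33,12,27,37]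

/-- The 42×42 matrix of consequences `M(a,b,c,d)` over a field `K`:
row `i` has entry `a` in column `p_i`, `b` in column `q_i`, `c` in column `r_i`,
`d` in column `s_i` (columns counted 1-based), and `0` elsewhere. -/
def consMatrix (K : Type*) [Field K] (a b c d : K) : Matrix (Fin 42) (Fin 42) K :=
  fun i j =>
    (if (j : ℕ) + 1 = colP i then a else 0) +
    (if (j : ℕ) + 1 = colQ i then b else 0) +
    (if (j : ℕ) + 1 = colR i then c else 0) +
    (if (j : ℕ) + 1 = colS i then d else 0)

/-!
A row of `M(0,1,0,d)` says that a kernel vector `v` satisfies `v q = -d * v s`: the matrix is the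
incidence matrix of a graph on the 42 columns with an edge `q → s` of gain `-d` for each row. If
`d ≠ 0`, a kernel vector is determined on a connected component by its value at one vertex, and that
value is free when the gains around all cycles of the component multiply to `1` (the component is
balanced) and zero otherwise. The graph has 11 components, and every one is balanced for `d = -1`.
Three of them contain a triangle `x → y → z`, `x → z`, so they are unbalanced for all other
`d ≠ 0`. This gives the ranks `42 - 11 = 31` and `42 - 8 = 34`. For `d = 0` the rows are unit
vectors and the rank counts the different `q`.
-/

/-- A directed multigraph on `V` with edges indexed by `E`, each carrying a gain in `K` by which the
value at the target is multiplied to obtain the value at the source. -/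
structure GainGraph (V E K : Type*) where
  src : E → V
  tgt : E → V
  gain : E → K

namespace GainGraph

open scoped Matrix

variable {V E K : Type*} [Field K]

section Potential

variable (G : GainGraph V E K)

/-- The potential `p` satisfies the edge `e`, that is, its values at the two ends are related by the
gain of `e`. -/
def IsSatisfied (p : V → K) (e : E) : Prop :=
  p (G.src e) = G.gain e * p (G.tgt e)

/-- There is an edge from `x` to `y` satisfied by the potential `p`. -/
def SatisfiedAdj (p : V → K) (x y : V) : Prop :=
  ∃ e, G.IsSatisfied p e ∧ G.src e = x ∧ G.tgt e = y

/-- `r` is the root of its component and the potential `p` satisfies all edges there, so that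
the component is balanced. The function `root` assigns to each vertex the root of its
component. -/
def IsBalancedRoot (root : V → V) (p : V → K) (r : V) : Prop :=
  root r = r ∧ ∀ e, root (G.src e) = r → G.IsSatisfied p e

variable {G} {root : V → V} {p v : V → K}

lemma eq_of_eqvGen_satisfiedAdj {β : Type*} {f : V → β} (hf : ∀ e, f (G.src e) = f (G.tgt e))
    {x y : V} (hxy : Relation.EqvGen (G.SatisfiedAdj p) x y) : f x = f y := by
  refine Setoid.eqvGen_le (s := Setoid.ker f) ?_ hxy
  rintro _ _ ⟨e, -, rfl, rfl⟩
  exact hf e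

lemma div_eq_div_of_eqvGen_satisfiedAdj (hp : ∀ x, p x ≠ 0) (hv : ∀ e, G.IsSatisfied v e)
    {x y : V} (hxy : Relation.EqvGen (G.SatisfiedAdj p) x y) : v x / p x = v y / p y := by
  refine Setoid.eqvGen_le (s := Setoid.ker fun x ↦ v x / p x) ?_ hxy
  rintro _ _ ⟨e, he, rfl, rfl⟩
  have hgain : G.gain e ≠ 0 := left_ne_zero_of_mul (he ▸ hp (G.src e))
  change v (G.src e) / p (G.src e) = v (G.tgt e) / p (G.tgt e)
  rw [hv e, he, mul_div_mul_left _ _ hgain]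

lemma eq_zero_of_isBalancedRoot_eq_zero (hroot : ∀ e, root (G.src e) = root (G.tgt e))
    (hp : ∀ x, p x ≠ 0) (hconn : ∀ x, Relation.EqvGen (G.SatisfiedAdj p) x (root x))
    (hv : ∀ e, G.IsSatisfied v e) (hzero : ∀ r, G.IsBalancedRoot root p r → v r = 0) :
    v = 0 := by
  have eq_smul (x) : v x = v (root x) / p (root x) * p x :=
    (div_eq_iff (hp x)).1 (div_eq_div_of_eqvGen_satisfiedAdj hp hv (hconn x))
  suffices ∀ x, v (root x) = 0 by
    ext x
    rw [eq_smul, this, zero_div, zero_mul, Pi.zero_apply]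
  intro x
  by_cases hx : G.IsBalancedRoot root p (root x)
  · exact hzero _ hx
  obtain ⟨e, hex, he⟩ : ∃ e, root (G.src e) = root x ∧ ¬ G.IsSatisfied p e := by
    simpa [IsBalancedRoot, ← eq_of_eqvGen_satisfiedAdj hroot (hconn x)] using hx
  by_contra hne
  -- The nonzero multiple `v` of `p` on this component satisfies `e`, hence so does `p`.
  refine he (mul_left_cancel₀ (div_ne_zero hne (hp (root x))) ?_)
  calc v (root x) / p (root x) * p (G.src e) = v (G.src e) := by rw [eq_smul (G.src e), hex]
    _ = G.gain e * v (G.tgt e) := hv e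
    _ = v (root x) / p (root x) * (G.gain e * p (G.tgt e)) := by
      rw [eq_smul (G.tgt e), ← hroot, hex, mul_left_comm]

lemma isSatisfied_mul_root (hroot : ∀ e, root (G.src e) = root (G.tgt e))
    {u : V → K}
    (hu : ∀ r, ¬ G.IsBalancedRoot root p r → u r = 0) (e : E) :
    G.IsSatisfied (fun x ↦ u (root x) * p x) e := by
  change u (root (G.src e)) * p (G.src e) = G.gain e * (u (root (G.tgt e)) * p (G.tgt e))
  rw [← hroot, mul_left_comm]
  by_cases he : G.IsBalancedRoot root p (root (G.src e))
  · rw [he.2 e rfl]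
  · rw [hu _ he, zero_mul, zero_mul]

end Potential

section IncMatrix

variable [Fintype V] [DecidableEq V] (G : GainGraph V E K)

/-- The incidence matrix of a gain graph, whose kernel consists of the potentials satisfying all
edges. -/
def incMatrix : Matrix E V K :=
  Matrix.of fun e ↦ Pi.single (G.src e) 1 - Pi.single (G.tgt e) (G.gain e)

lemma mem_ker_incMatrix {v : V → K} :
    v ∈ LinearMap.ker G.incMatrix.mulVecLin ↔ ∀ e, G.IsSatisfied v e := by
  have apply_row (e) : (G.incMatrix *ᵥ v) e = v (G.src e) - G.gain e * v (G.tgt e) := by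
    change (Pi.single (G.src e) 1 - Pi.single (G.tgt e) (G.gain e)) ⬝ᵥ v = _
    rw [sub_dotProduct, single_dotProduct, single_dotProduct, one_mul]
  simp only [LinearMap.mem_ker, Matrix.mulVecLin_apply, funext_iff, apply_row, Pi.zero_apply,
    sub_eq_zero, IsSatisfied]

/-- For the frame matroid of a gain graph: the rank is the number of vertices minus the number of
balanced components. -/
theorem rank_incMatrix_add_card {root : V → V} {p : V → K}
    (hroot : ∀ e, root (G.src e) = root (G.tgt e)) (hp : ∀ x, p x ≠ 0)
    (hconn : ∀ x, Relation.EqvGen (G.SatisfiedAdj p) x (root x)) :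
    G.incMatrix.rank + Nat.card {r // G.IsBalancedRoot root p r} = Fintype.card V := by
  classical
  let restrict : LinearMap.ker G.incMatrix.mulVecLin →ₗ[K] ({r // G.IsBalancedRoot root p r} → K) :=
    (LinearMap.funLeft K K Subtype.val).comp (Submodule.subtype _)
  have injective : Function.Injective restrict := by
    refine (injective_iff_map_eq_zero restrict).2 fun v hv ↦ Subtype.ext ?_
    exact eq_zero_of_isBalancedRoot_eq_zero hroot hp hconn (G.mem_ker_incMatrix.1 v.2)
      fun r hr ↦ congrFun hv ⟨r, hr⟩
  have surjective : Function.Surjective restrict := by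
    intro c
    let u (r : V) : K := if hr : G.IsBalancedRoot root p r then c ⟨r, hr⟩ / p r else 0
    refine ⟨⟨fun x ↦ u (root x) * p x, G.mem_ker_incMatrix.2 <|
      isSatisfied_mul_root hroot fun r hr ↦ dif_neg hr⟩, funext fun ⟨r, hr⟩ ↦ ?_⟩
    change u (root r) * p r = c ⟨r, hr⟩
    rw [hr.1, show u r = c ⟨r, hr⟩ / p r from dif_pos hr, div_mul_cancel₀ _ (hp r)]
  have finrank_ker := (LinearEquiv.ofBijective restrict ⟨injective, surjective⟩).finrank_eq
  rw [Module.finrank_fintype_fun_eq_card, ← Nat.card_eq_fintype_card] at finrank_ker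
  rw [← finrank_ker, Matrix.rank, LinearMap.finrank_range_add_finrank_ker,
    Module.finrank_fintype_fun_eq_card]

lemma rank_incMatrix_of_gain_eq_zero [Fintype E] (hgain : ∀ e, G.gain e = 0) :
    G.incMatrix.rank = (Finset.univ.image G.src).card := by
  have rows : Set.range G.incMatrix.row =
      Set.range fun x : Finset.univ.image G.src ↦ Pi.basisFun K V x := by
    ext v
    simp [incMatrix, hgain]
  have independent : LinearIndependent K fun x : Finset.univ.image G.src ↦ Pi.basisFun K V x :=
    (Pi.basisFun K V).linearIndependent.comp _ Subtype.val_injective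
  rw [Matrix.rank_eq_finrank_span_row, rows, finrank_span_eq_card independent, Fintype.card_coe]

end IncMatrix

end GainGraph

lemma eqvGen_iterate {α : Type*} {r : α → α → Prop} {f : α → α}
    (hf : ∀ x, Relation.EqvGen r x (f x)) (n : ℕ) (x : α) : Relation.EqvGen r x (f^[n] x) := by
  induction n with
  | zero => exact .refl x
  | succ n ih =>
    rw [Function.iterate_succ_apply']
    exact ih.trans _ _ _ (hf _)

section Consequences

/-- The source of the `i`-th consequence edge: the zero-based column `q_i`. -/
def consSrc (i : Fin 42) : Fin 42 := Fin.ofNat 42 (colQ i - 1)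

/-- The target of the `i`-th consequence edge: the zero-based column `s_i`. -/
def consTgt (i : Fin 42) : Fin 42 := Fin.ofNat 42 (colS i - 1)

lemma colQ_eq (i : Fin 42) : colQ i = consSrc i + 1 := by
  revert i; decide

lemma colS_eq (i : Fin 42) : colS i = consTgt i + 1 := by
  revert i; decide

/-- The gain graph whose incidence matrix is `M(0,1,0,d)`. -/
def consGraph {K : Type*} [Field K] (d : K) : GainGraph (Fin 42) (Fin 42) K :=
  ⟨consSrc, consTgt, fun _ ↦ -d⟩

/-- The parent map of a spanning forest of the consequence graph; roots are fixed. -/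
def forestParent : Fin 42 → Fin 42 :=
  ![0, 13, 15, 13, 21, 21, 6, 12, 31, 3, 13, 38, 12, 13, 40, 41, 27, 20, 5, 21, 40,
    41, 22, 26, 30, 25, 26, 27, 17, 31, 30, 40, 18, 36, 38, 20, 21, 40, 41, 30, 40, 41]

/-- The exponent of `-d` in the potential of a vertex: it drops by one along each edge of the
spanning forest. -/
def forestHeight : Fin 42 → ℕ :=
  ![0, 1, 2, 1, 2, 2, 0, 1, 2, 0, 1, 2, 0, 0, 1, 1, 1, 2, 1, 2, 1,
    1, 0, 1, 2, 0, 0, 0, 1, 2, 1, 1, 0, 1, 2, 0, 0, 1, 1, 0, 0, 0]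

/-- The root of the tree containing a vertex. -/
def forestRoot : Fin 42 → Fin 42 :=
  -- No tree of the forest is deeper than four.
  forestParent^[4]

lemma forestRoot_consSrc (i : Fin 42) : forestRoot (consSrc i) = forestRoot (consTgt i) := by
  revert i; decide

set_option maxRecDepth 2000 in
lemma forestParent_eq_or_exists_edge (x : Fin 42) :
    forestParent x = x ∨ ∃ i, forestHeight (consSrc i) = forestHeight (consTgt i) + 1 ∧
      (consSrc i = x ∧ consTgt i = forestParent x ∨
        consSrc i = forestParent x ∧ consTgt i = x) := by
  revert x; decide

lemma forestHeight_consSrc (i : Fin 42) :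
    forestHeight (consSrc i) = forestHeight (consTgt i) ∨
      forestHeight (consSrc i) = forestHeight (consTgt i) + 1 := by
  revert i; decide

variable {K : Type*} [Field K] {d : K}

lemma consMatrix_eq_incMatrix : consMatrix K 0 1 0 d = (consGraph d).incMatrix := by
  ext i j
  simp [consMatrix, GainGraph.incMatrix, consGraph, colQ_eq, colS_eq, Fin.val_inj, Pi.single_apply,
    sub_eq_add_neg, neg_ite]

lemma isSatisfied_forestHeight {i : Fin 42}
    (hi : forestHeight (consSrc i) = forestHeight (consTgt i) + 1) :
    (consGraph d).IsSatisfied (fun x ↦ (-d) ^ forestHeight x) i := by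
  simp only [GainGraph.IsSatisfied, consGraph, hi, pow_succ']

lemma eqvGen_forestRoot (x : Fin 42) :
    Relation.EqvGen ((consGraph d).SatisfiedAdj fun x ↦ (-d) ^ forestHeight x) x
      (forestRoot x) := by
  refine eqvGen_iterate (fun x ↦ ?_) 4 x
  obtain hx | ⟨i, hi, ⟨hsrc, htgt⟩ | ⟨hsrc, htgt⟩⟩ := forestParent_eq_or_exists_edge x
  · rw [hx]
    exact .refl x
  · exact .rel _ _ ⟨i, isSatisfied_forestHeight hi, hsrc, htgt⟩
  · exact .symm _ _ <| .rel _ _ ⟨i, isSatisfied_forestHeight hi, hsrc, htgt⟩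

lemma rank_consMatrix_add_card (hd : d ≠ 0) :
    (consMatrix K 0 1 0 d).rank + Nat.card {r // (consGraph d).IsBalancedRoot forestRoot
      (fun x ↦ (-d) ^ forestHeight x) r} = 42 := by
  rw [consMatrix_eq_incMatrix]
  exact (consGraph d).rank_incMatrix_add_card forestRoot_consSrc
    (fun x ↦ pow_ne_zero _ (neg_ne_zero.2 hd)) eqvGen_forestRoot

lemma isSatisfied_forestHeight_iff (hd : d ≠ 0) (hd' : d ≠ -1) (i : Fin 42) :
    (consGraph d).IsSatisfied (fun x ↦ (-d) ^ forestHeight x) i ↔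
      forestHeight (consSrc i) = forestHeight (consTgt i) + 1 := by
  refine ⟨fun hi ↦ (forestHeight_consSrc i).resolve_left fun heq ↦ hd' ?_,
    isSatisfied_forestHeight⟩
  have hpow : (-d) ^ forestHeight (consTgt i) = -d * (-d) ^ forestHeight (consTgt i) := by
    simpa only [GainGraph.IsSatisfied, consGraph, heq] using hi
  rw [eq_comm, mul_eq_right₀ (pow_ne_zero _ (neg_ne_zero.2 hd))] at hpow
  rw [← hpow, neg_neg]

theorem rank_consMatrix_zero : (consMatrix K 0 1 0 0).rank = 26 := by
  rw [consMatrix_eq_incMatrix, GainGraph.rank_incMatrix_of_gain_eq_zero _ fun _ ↦ neg_zero]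
  change (Finset.univ.image consSrc).card = 26
  decide

theorem rank_consMatrix_neg_one : (consMatrix K 0 1 0 (-1)).rank = 31 := by
  have balanced_iff (r) : (consGraph (-1 : K)).IsBalancedRoot forestRoot
      (fun x ↦ (- -1) ^ forestHeight x) r ↔ forestRoot r = r := by
    simp [GainGraph.IsBalancedRoot, GainGraph.IsSatisfied, consGraph]
  have card_roots : Fintype.card {r // forestRoot r = r} = 11 := by decide
  have rank_add := rank_consMatrix_add_card (neg_ne_zero.2 (one_ne_zero (α := K)))
  simp only [balanced_iff, Nat.card_eq_fintype_card, card_roots] at rank_add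
  omega

theorem rank_consMatrix_of_ne (hd : d ≠ 0) (hd' : d ≠ -1) : (consMatrix K 0 1 0 d).rank = 34 := by
  have balanced_iff (r) : (consGraph d).IsBalancedRoot forestRoot
      (fun x ↦ (-d) ^ forestHeight x) r ↔ forestRoot r = r ∧ ∀ i, forestRoot (consSrc i) = r →
        forestHeight (consSrc i) = forestHeight (consTgt i) + 1 := by
    simp only [GainGraph.IsBalancedRoot, isSatisfied_forestHeight_iff hd hd']
    rfl
  have card_roots : Fintype.card {r // forestRoot r = r ∧ ∀ i, forestRoot (consSrc i) = r →
      forestHeight (consSrc i) = forestHeight (consTgt i) + 1} = 8 := by decide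
  have rank_add := rank_consMatrix_add_card hd
  simp only [balanced_iff, Nat.card_eq_fintype_card, card_roots] at rank_add
  omega

end Consequences

lemma ratFunc_X_ne_neg_one {K : Type*} [Field K] : (RatFunc.X : RatFunc K) ≠ -1 :=
  ne_of_apply_ne RatFunc.intDegree (by simp)

theorem stmt_6_general (K : Type*) [Field K] :
    (∀ d : K, d ≠ 0 → d ≠ -1 → (consMatrix K 0 1 0 d).rank = 34) ∧
    (consMatrix K 0 1 0 0).rank = 26 ∧
    (consMatrix K 0 1 0 (-1)).rank = 31 :=
  ⟨fun _ ↦ rank_consMatrix_of_ne, rank_consMatrix_zero, rank_consMatrix_neg_one⟩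

/-- For the one-parameter family `(0,1,0,d)`: over the rational function field `ℚ(t)`
the matrix of consequences `M(0,1,0,t)` has rank exactly 34, and over `ℚ` the matrix
`M(0,1,0,0)` has rank exactly 26 and `M(0,1,0,-1)` has rank exactly 31. -/
theorem stmt_6 :
    (consMatrix (RatFunc ℚ) 0 1 0 RatFunc.X).rank = 34 ∧
    (consMatrix ℚ 0 1 0 0).rank = 26 ∧
    (consMatrix ℚ 0 1 0 (-1)).rank = 31 :=
  ⟨(stmt_6_general _).1 _ RatFunc.X_ne_zero ratFunc_X_ne_neg_one, (stmt_6_general ℚ).2⟩
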